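/- arXiv:2410.08316 — 3 statements merged into one kernel-verified Lean document; each statement's English description precedes it below -/
import Mathlib

section
/- (Proposition 1, linear transformation property.) Fix m ≥ 1, a finite dataset index type K, item counts n : K → ℕ with n k ≥ 1, base scores s₀ : ∀ k, Fin (n k) → ℝ, labels z : Fin m → ∀ k, Fin (n k) → ℝ, temperatures β : Fin m → ℝ with β j > 0, and a probability measure μ on the weight space W := (Fin m → ℝ). For a conditioned model S : W → ∀ k, Fin (n k) → ℝ define the Weight-COS-DPO loss F_β(S) := ∫_W ( ∑_{k ∈ K} ∑_{j} (w j) · ℓ(S w k, s₀ k, β j, z j k) ) dμ(w). Let c > 0 and suppose S⋆ minimizes F_β, i.e., F_β(S⋆) ≤ F_β(S) for every S : W → ∀ k, Fin (n k) → ℝ. Then the transformed model S' defined by S' w k i := (1 − 1/c)·s₀ k i + (1/c)·S⋆ w k i minimizes the loss with temperature c·β: F_{c·β}(S') ≤ F_{c·β}(S) for every S : W → ∀ k, Fin (n k) → ℝ. -/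
open scoped BigOperators
open MeasureTheory

/-- Per-list LiPO loss. -/
noncomputable def lipoLoss {n : ℕ} (s s₀ : Fin n → ℝ) (β : ℝ) (z : Fin n → ℝ) : ℝ :=
  - ∑ i, z i * Real.log (Real.exp (β * (s i - s₀ i)) / ∑ i', Real.exp (β * (s i' - s₀ i')))

/-!
The LiPO loss sees the scores only through `β * (s - s₀)`, so multiplying the temperature by `c`
amounts to dilating the scores by the factor `c` about the base scores `s₀`. Hence `F_{cβ}` is
`F_β` precomposed with a homothety of the space of models. For `c ≠ 0` this homothety is a
bijection, and its inverse carries minimizers of `F_β` to minimizers of `F_{cβ}`.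
-/

/-- The Weight-COS-DPO loss `F_β(S)` of a weight-conditioned model `S` with temperature vector `β`:
the `μ`-average over weights `w` of the `w`-weighted sum of LiPO losses over the dataset `K` and the
objectives `ι`. A Bochner integral, hence `0` where the integrand is not integrable. -/
noncomputable def weightCosDPOLoss {ι K : Type*} [Fintype ι] [Fintype K] {n : K → ℕ}
    (s₀ : ∀ k, Fin (n k) → ℝ) (z : ι → ∀ k, Fin (n k) → ℝ) (μ : Measure (ι → ℝ))
    (β : ι → ℝ) (S : (ι → ℝ) → ∀ k, Fin (n k) → ℝ) : ℝ :=
  ∫ w, (∑ k, ∑ j, w j * lipoLoss (S w k) (s₀ k) (β j) (z j k)) ∂μ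

theorem lipoLoss_mul_temperature {n : ℕ} (s s₀ : Fin n → ℝ) (c β : ℝ) (z : Fin n → ℝ) :
    lipoLoss s s₀ (c * β) z = lipoLoss (AffineMap.homothety s₀ c s) s₀ β z := by
  have exponent_eq (i : Fin n) :
      c * β * (s i - s₀ i) = β * (AffineMap.homothety s₀ c s i - s₀ i) := by
    simp [AffineMap.homothety_apply, mul_assoc, mul_left_comm]
  simp only [lipoLoss, exponent_eq]

section WeightCosDPO

variable {ι K : Type*} [Fintype ι] [Fintype K] {n : K → ℕ} (s₀ : ∀ k, Fin (n k) → ℝ)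
  (z : ι → ∀ k, Fin (n k) → ℝ) (μ : Measure (ι → ℝ)) (β : ι → ℝ)

theorem weightCosDPOLoss_smul_temperature (c : ℝ) (S : (ι → ℝ) → ∀ k, Fin (n k) → ℝ) :
    weightCosDPOLoss s₀ z μ (c • β) S =
      weightCosDPOLoss s₀ z μ β (AffineMap.homothety (Function.const _ s₀) c S) := by
  simp [weightCosDPOLoss, lipoLoss_mul_temperature, AffineMap.homothety_apply]

theorem weight_cos_dpo_linear_transform_general {c : ℝ} (hc : c ≠ 0)
    {Sstar : (ι → ℝ) → ∀ k, Fin (n k) → ℝ}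
    (hmin : IsMinOn (weightCosDPOLoss s₀ z μ β) Set.univ Sstar) :
    IsMinOn (weightCosDPOLoss s₀ z μ (c • β)) Set.univ
      (AffineMap.homothety (Function.const _ s₀) c⁻¹ Sstar) := by
  refine isMinOn_univ_iff.mpr fun S ↦ ?_
  calc
    weightCosDPOLoss s₀ z μ (c • β) (AffineMap.homothety (Function.const _ s₀) c⁻¹ Sstar)
      = weightCosDPOLoss s₀ z μ β Sstar := by
        rw [weightCosDPOLoss_smul_temperature, ← AffineMap.homothety_mul_apply,
          mul_inv_cancel₀ hc, AffineMap.homothety_one, AffineMap.id_apply]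
    _ ≤ weightCosDPOLoss s₀ z μ β (AffineMap.homothety (Function.const _ s₀) c S) :=
        isMinOn_univ_iff.mp hmin _
    _ = weightCosDPOLoss s₀ z μ (c • β) S :=
        (weightCosDPOLoss_smul_temperature s₀ z μ β c S).symm

end WeightCosDPO

/-- Proposition 1 (linear transformation property): if `S⋆` minimizes the
Weight-COS-DPO loss with temperature vector `β`, then the affinely transformed
model minimizes the loss with temperature `c·β`. -/
theorem weight_cos_dpo_linear_transform
    {m : ℕ} (hm : 1 ≤ m) {K : Type*} [Fintype K]
    (n : K → ℕ) (hn : ∀ k, 1 ≤ n k)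
    (s₀ : ∀ k, Fin (n k) → ℝ)
    (z : Fin m → ∀ k, Fin (n k) → ℝ)
    (β : Fin m → ℝ) (hβ : ∀ j, 0 < β j)
    (μ : Measure (Fin m → ℝ)) [IsProbabilityMeasure μ]
    (c : ℝ) (hc : 0 < c)
    (Sstar : (Fin m → ℝ) → ∀ k, Fin (n k) → ℝ)
    (hmin : ∀ S : (Fin m → ℝ) → ∀ k, Fin (n k) → ℝ,
      (∫ w, (∑ k, ∑ j, w j * lipoLoss (Sstar w k) (s₀ k) (β j) (z j k)) ∂μ)
        ≤ ∫ w, (∑ k, ∑ j, w j * lipoLoss (S w k) (s₀ k) (β j) (z j k)) ∂μ)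
    (S' : (Fin m → ℝ) → ∀ k, Fin (n k) → ℝ)
    (hS' : ∀ w k i, S' w k i = (1 - 1 / c) * s₀ k i + (1 / c) * Sstar w k i) :
    ∀ S : (Fin m → ℝ) → ∀ k, Fin (n k) → ℝ,
      (∫ w, (∑ k, ∑ j, w j * lipoLoss (S' w k) (s₀ k) (c * β j) (z j k)) ∂μ)
        ≤ ∫ w, (∑ k, ∑ j, w j * lipoLoss (S w k) (s₀ k) (c * β j) (z j k)) ∂μ := by
  obtain rfl : S' = AffineMap.homothety (Function.const _ s₀) c⁻¹ Sstar := by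
    ext w k i
    simp [hS', AffineMap.homothety_eq_lineMap, AffineMap.lineMap_apply_module]
  exact isMinOn_univ_iff.mp <|
    weight_cos_dpo_linear_transform_general s₀ z μ β hc.ne' (isMinOn_univ_iff.mpr hmin)
end

section
/- (Pairwise ListNet loss equals DPO loss.) Let s, s₀ : Fin 2 → ℝ, let β ∈ ℝ, and let z : Fin 2 → ℝ be the L1-normalized binary preference label with z 0 = 1 and z 1 = 0 (item 0 preferred over item 1). Then the per-list LiPO loss equals the DPO negative log-likelihood: ℓ(s, s₀, β, z) = − log ( σ ( β·( (s 0 − s₀ 0) − (s 1 − s₀ 1) ) ) ), where σ(x) := 1 / (1 + exp(−x)) is the logistic sigmoid. -/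
open scoped BigOperators

theorem sum_exp_eq_exp_mul_one_add_sum_erase {ι : Type*} [DecidableEq ι] {t : Finset ι}
    (x : ι → ℝ) {i : ι} (hi : i ∈ t) :
    ∑ j ∈ t, Real.exp (x j)
      = Real.exp (x i) * (1 + ∑ j ∈ t.erase i, Real.exp (-(x i - x j))) := by
  have exp_shift (j : ι) : Real.exp (x i) * Real.exp (-(x i - x j)) = Real.exp (x j) := by
    rw [← Real.exp_add, neg_sub, add_sub_cancel]
  simp only [mul_add, mul_one, Finset.mul_sum, exp_shift]
  exact (Finset.add_sum_erase t (fun j ↦ Real.exp (x j)) hi).symm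

theorem exp_div_sum_exp_eq_one_div {ι : Type*} [DecidableEq ι] {t : Finset ι}
    (x : ι → ℝ) {i : ι} (hi : i ∈ t) :
    Real.exp (x i) / ∑ j ∈ t, Real.exp (x j)
      = 1 / (1 + ∑ j ∈ t.erase i, Real.exp (-(x i - x j))) := by
  rw [sum_exp_eq_exp_mul_one_add_sum_erase x hi,
    div_mul_cancel_left₀ (Real.exp_ne_zero (x i)), one_div]

theorem lipo_eq_dpo_general {n : ℕ} (s s₀ : Fin n → ℝ) (β : ℝ) (z : Fin n → ℝ) :
    lipoLoss s s₀ β z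
      = - ∑ i, z i * Real.log (1 / (1 + ∑ j ∈ Finset.univ.erase i,
          Real.exp (-(β * ((s i - s₀ i) - (s j - s₀ j)))))) := by
  simp only [lipoLoss, mul_sub β (s _ - s₀ _),
    exp_div_sum_exp_eq_one_div (fun i ↦ β * (s i - s₀ i)) (Finset.mem_univ _)]

/-- With binary L1-normalized labels on a two-item list, the LiPO loss coincides
with the DPO negative log-likelihood `− log σ(β((s 0 − s₀ 0) − (s 1 − s₀ 1)))`,
where `σ(x) = 1/(1 + exp(−x))`. -/
theorem lipo_eq_dpo (s s₀ : Fin 2 → ℝ) (β : ℝ)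
    (z : Fin 2 → ℝ) (hz0 : z 0 = 1) (hz1 : z 1 = 0) :
    lipoLoss s s₀ β z
      = - Real.log (1 / (1 + Real.exp (-(β * ((s 0 - s₀ 0) - (s 1 - s₀ 1)))))) := by
  have erase_zero : (Finset.univ : Finset (Fin 2)).erase 0 = {1} := rfl
  rw [lipo_eq_dpo_general, Fin.sum_univ_two, hz0, hz1, one_mul, zero_mul, add_zero, erase_zero,
    Finset.sum_singleton]
end

section
/- (Proposition 2, linear transformation property with penalization.) Fix m ≥ 1, a finite dataset index type K, item counts n : K → ℕ with n k ≥ 1, base scores s₀ : ∀ k, Fin (n k) → ℝ, labels z : Fin m → ∀ k, Fin (n k) → ℝ, temperatures β : Fin m → ℝ with β j > 0, a penalization coefficient λ ∈ ℝ, an arbitrary penalty function G : (Fin m → ℝ) → (Fin m → ℝ) → ℝ (taking the weight vector and the loss vector), and a probability measure μ on the weight space W := (Fin m → ℝ). For S : W → ∀ k, Fin (n k) → ℝ, let L̄_β(S, w) : Fin m → ℝ be the aggregated loss vector L̄_β(S, w) j := ∑_{k ∈ K} ℓ(S w k, s₀ k, β j, z j k), and define the penalized Weight-COS-DPO loss F_β(S)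 := ∫_W ( ∑_j (w j) · L̄_β(S, w) j + λ · G w (L̄_β(S, w)) ) dμ(w). Let c > 0 and suppose S⋆ minimizes F_β over all S : W → ∀ k, Fin (n k) → ℝ. Then S' defined by S' w k i := (1 − 1/c)·s₀ k i + (1/c)·S⋆ w k i minimizes F_{c·β} over all S : W → ∀ k, Fin (n k) → ℝ. -/
open scoped BigOperators
open MeasureTheory

/-!
The LiPO loss depends on the scores only through the products `β * (s i - s₀ i)`, so multiplying the
temperature by `c` has the same effect as the homothety of ratio `c` and center `s₀` on the scores.
For `c ≠ 0` this homothety is a bijection of the space of models, and `S'` is the image of `S⋆` under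
its inverse. Hence, for any objective that sees a model only through its losses, minimality of `S⋆`
at temperature `β` transports to minimality of `S'` at temperature `c * β`.
-/

theorem lipoLoss_homothety {n : ℕ} (s s₀ : Fin n → ℝ) (c β : ℝ) (z : Fin n → ℝ) :
    lipoLoss (AffineMap.homothety s₀ c s) s₀ β z = lipoLoss s s₀ (c * β) z := by
  have exponent_eq (i : Fin n) :
      β * (AffineMap.homothety s₀ c s i - s₀ i) = c * β * (s i - s₀ i) := by
    simp only [AffineMap.homothety_apply, vsub_eq_sub, vadd_eq_add, Pi.add_apply, Pi.smul_apply,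
      Pi.sub_apply, smul_eq_mul]
    ring
  simp only [lipoLoss, exponent_eq]

section Aggregated

variable {J K : Type*} [Fintype K] {n : K → ℕ}

/-- The vector of aggregated LiPO losses `L̄_β`, whose `j`-th entry sums over the dataset `K` the
losses at temperature `β j` and labels `z j`. -/
noncomputable def aggregatedLipoLoss (s s₀ : ∀ k, Fin (n k) → ℝ) (β : J → ℝ)
    (z : J → ∀ k, Fin (n k) → ℝ) : J → ℝ :=
  fun j => ∑ k, lipoLoss (s k) (s₀ k) (β j) (z j k)

theorem aggregatedLipoLoss_homothety (s s₀ : ∀ k, Fin (n k) → ℝ) (c : ℝ) (β : J → ℝ)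
    (z : J → ∀ k, Fin (n k) → ℝ) :
    aggregatedLipoLoss (AffineMap.homothety s₀ c s) s₀ β z =
      aggregatedLipoLoss s s₀ (c • β) z :=
  funext fun j => Finset.sum_congr rfl fun k _ =>
    lipoLoss_homothety (s k) (s₀ k) c (β j) (z j k)

theorem penalized_weight_cos_dpo_linear_transform_general {W α : Type*} [LE α]
    {s₀ : ∀ k, Fin (n k) → ℝ} {z : J → ∀ k, Fin (n k) → ℝ} {β : J → ℝ}
    (Φ : (W → J → ℝ) → α) {c : ℝ} (hc : c ≠ 0) {Sstar S' : W → ∀ k, Fin (n k) → ℝ}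
    (hmin : ∀ S : W → ∀ k, Fin (n k) → ℝ,
      Φ (fun w => aggregatedLipoLoss (Sstar w) s₀ β z) ≤
        Φ (fun w => aggregatedLipoLoss (S w) s₀ β z))
    (hS' : ∀ w k i, S' w k i = (1 - 1 / c) * s₀ k i + (1 / c) * Sstar w k i)
    (S : W → ∀ k, Fin (n k) → ℝ) :
    Φ (fun w => aggregatedLipoLoss (S' w) s₀ (c • β) z) ≤
      Φ (fun w => aggregatedLipoLoss (S w) s₀ (c • β) z) := by
  have homothety_S' (w : W) : AffineMap.homothety s₀ c (S' w) = Sstar w := by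
    ext k i
    simp only [AffineMap.homothety_apply, vsub_eq_sub, vadd_eq_add, Pi.add_apply, Pi.smul_apply,
      Pi.sub_apply, smul_eq_mul, hS']
    field_simp
    ring
  simp only [← aggregatedLipoLoss_homothety, homothety_S']
  exact hmin fun w => AffineMap.homothety s₀ c (S w)

end Aggregated

/-- Proposition 2 (linear transformation property with penalization): if `S⋆`
minimizes the penalized Weight-COS-DPO loss with temperature vector `β`, where
the penalty is an arbitrary function `G` of the weight vector and the aggregated
loss vector, then the affinely transformed model minimizes the penalized loss
with temperature `c·β`. -/
theorem penalized_weight_cos_dpo_linear_transform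
    {m : ℕ} (hm : 1 ≤ m) {K : Type*} [Fintype K]
    (n : K → ℕ) (hn : ∀ k, 1 ≤ n k)
    (s₀ : ∀ k, Fin (n k) → ℝ)
    (z : Fin m → ∀ k, Fin (n k) → ℝ)
    (β : Fin m → ℝ) (hβ : ∀ j, 0 < β j)
    (lam : ℝ) (G : (Fin m → ℝ) → (Fin m → ℝ) → ℝ)
    (μ : Measure (Fin m → ℝ)) [IsProbabilityMeasure μ]
    (c : ℝ) (hc : 0 < c)
    (Sstar : (Fin m → ℝ) → ∀ k, Fin (n k) → ℝ)
    (hmin : ∀ S : (Fin m → ℝ) → ∀ k, Fin (n k) → ℝ,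
      (∫ w, ((∑ j, w j * ∑ k, lipoLoss (Sstar w k) (s₀ k) (β j) (z j k))
          + lam * G w (fun j => ∑ k, lipoLoss (Sstar w k) (s₀ k) (β j) (z j k))) ∂μ)
        ≤ ∫ w, ((∑ j, w j * ∑ k, lipoLoss (S w k) (s₀ k) (β j) (z j k))
          + lam * G w (fun j => ∑ k, lipoLoss (S w k) (s₀ k) (β j) (z j k))) ∂μ)
    (S' : (Fin m → ℝ) → ∀ k, Fin (n k) → ℝ)
    (hS' : ∀ w k i, S' w k i = (1 - 1 / c) * s₀ k i + (1 / c) * Sstar w k i) :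
    ∀ S : (Fin m → ℝ) → ∀ k, Fin (n k) → ℝ,
      (∫ w, ((∑ j, w j * ∑ k, lipoLoss (S' w k) (s₀ k) (c * β j) (z j k))
          + lam * G w (fun j => ∑ k, lipoLoss (S' w k) (s₀ k) (c * β j) (z j k))) ∂μ)
        ≤ ∫ w, ((∑ j, w j * ∑ k, lipoLoss (S w k) (s₀ k) (c * β j) (z j k))
          + lam * G w (fun j => ∑ k, lipoLoss (S w k) (s₀ k) (c * β j) (z j k))) ∂μ :=
  penalized_weight_cos_dpo_linear_transform_general
    (fun L => ∫ w, ((∑ j, w j * L w j) + lam * G w (L w)) ∂μ) hc.ne' hmin hS'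
end
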